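/- Let d, k be positive integers with 2k ≤ d, A* ∈ ℝ^{d×d}, and U₁*, U₂* ∈ ℝ^{d×k} such that the concatenated matrix [U₁* U₂*] has rank 2k. Consider the two-task Meta-LoRA loss 𝓛(A, U₁, U₂) = (1/2)·Σ_{t=1}^2 ‖A* + U_t*(U_t*)ᵀ − A − U_t(U_t)ᵀ‖_F² as a smooth function on the normed space E = ℝ^{d×d} × ℝ^{d×k} × ℝ^{d×k}. Then for any point p = (Â, Û₁, Û₂) ∈ E, 𝓛(p) = 0 if and only if p is a second-order stationary point of 𝓛, i.e., the Fréchet derivative of 𝓛 at p vanishes and the second derivative of 𝓛 at p is positive semidefinite as a quadratic form (for every direction v ∈ E, the second iterated derivative of 𝓛 at p evaluated at (v, v) is nonnegative). -/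

import Mathlib

open Matrix BigOperators

noncomputable section

attribute [local instance] Matrix.normedAddCommGroup Matrix.normedSpace

/-- Squared Frobenius norm of a real matrix. -/
def frobSq {m n : Type*} [Fintype m] [Fintype n] (M : Matrix m n ℝ) : ℝ :=
  ∑ i, ∑ j, (M i j) ^ 2

/-- Frobenius inner product. -/
def ipF {m n : Type*} [Fintype m] [Fintype n] (M N : Matrix m n ℝ) : ℝ :=
  ∑ i, ∑ j, M i j * N i j

lemma frobSq_eq_zero {m n : Type*} [Fintype m] [Fintype n] {M : Matrix m n ℝ}
    (h : frobSq M = 0) : M = 0 := by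
  unfold frobSq at h
  ext i j
  have h1 := (Finset.sum_eq_zero_iff_of_nonneg
    (fun i _ => Finset.sum_nonneg (fun j _ => sq_nonneg (M i j)))).1 h i (Finset.mem_univ _)
  replace h1 := (Finset.sum_eq_zero_iff_of_nonneg (fun j _ => sq_nonneg (M i j))).1 h1
  exact pow_eq_zero_iff (two_ne_zero) |>.1 (h1 j (Finset.mem_univ _))

lemma frobSq_nonneg {m n : Type*} [Fintype m] [Fintype n] (M : Matrix m n ℝ) :
    0 ≤ frobSq M :=
  Finset.sum_nonneg (fun _ _ => Finset.sum_nonneg (fun _ _ => sq_nonneg _))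

lemma ipF_eq_trace {m n : Type*} [Fintype m] [Fintype n] (M N : Matrix m n ℝ) :
    ipF M N = (Mᵀ * N).trace := by
  unfold ipF
  rw [Finset.sum_comm]
  simp [Matrix.trace, Matrix.mul_apply]

lemma ipF_self {m n : Type*} [Fintype m] [Fintype n] (M : Matrix m n ℝ) :
    ipF M M = frobSq M := by
  simp [ipF, frobSq, sq]

lemma frobSq_expand {m n : Type*} [Fintype m] [Fintype n] (R S Q : Matrix m n ℝ) (s : ℝ) :
    frobSq (R - s • S - s ^ 2 • Q) = frobSq R + (-2 * ipF R S) * s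
      + (frobSq S - 2 * ipF R Q) * s ^ 2 + (2 * ipF S Q) * s ^ 3 + frobSq Q * s ^ 4 := by
  unfold frobSq ipF
  simp only [Finset.mul_sum, Finset.sum_mul, ← Finset.sum_add_distrib, ← Finset.sum_sub_distrib]
  refine Finset.sum_congr rfl fun i _ => Finset.sum_congr rfl fun j _ => ?_
  simp only [Matrix.sub_apply, Matrix.smul_apply, smul_eq_mul]
  ring

lemma frobSq_smul {m n : Type*} [Fintype m] [Fintype n] (S : Matrix m n ℝ) (s : ℝ) :
    frobSq (s • S) = s ^ 2 * frobSq S := by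
  unfold frobSq
  simp only [Finset.mul_sum]
  refine Finset.sum_congr rfl fun i _ => Finset.sum_congr rfl fun j _ => ?_
  simp only [Matrix.smul_apply, smul_eq_mul]
  ring

lemma ipF_smul {m n : Type*} [Fintype m] [Fintype n] (R S : Matrix m n ℝ) (s : ℝ) :
    ipF R (s • S) = s * ipF R S := by
  unfold ipF
  simp only [Finset.mul_sum]
  refine Finset.sum_congr rfl fun i _ => Finset.sum_congr rfl fun j _ => ?_
  simp only [Matrix.smul_apply, smul_eq_mul]
  ring

lemma ipF_neg {m n : Type*} [Fintype m] [Fintype n] (R S : Matrix m n ℝ) :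
    ipF (-R) S = - ipF R S := by
  simp [ipF]

lemma ipF_vec {d : ℕ} (R : Matrix (Fin d) (Fin d) ℝ) (z : Fin d → ℝ) :
    ipF R (vecMulVec z z) = z ⬝ᵥ (R *ᵥ z) := by
  simp only [ipF, dotProduct, mulVec, vecMulVec_apply, Finset.mul_sum]
  refine Finset.sum_congr rfl fun i _ => Finset.sum_congr rfl fun j _ => ?_
  ring

lemma line_derivs {E : Type*} [NormedAddCommGroup E] [NormedSpace ℝ E] (L : E → ℝ)
    (hL : ContDiff ℝ 2 L) (p v : E) (c0 c1 c2 c3 c4 : ℝ)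
    (h : ∀ s : ℝ, L (p + s • v) = c0 + c1 * s + c2 * s ^ 2 + c3 * s ^ 3 + c4 * s ^ 4) :
    fderiv ℝ L p v = c1 ∧ iteratedFDeriv ℝ 2 L p ![v, v] = 2 * c2 := by
  have hline : ∀ s : ℝ, HasDerivAt (fun s : ℝ => p + s • v) v s := fun s => by
    simpa using ((hasDerivAt_id s).smul_const v).const_add p
  have key : ∀ s : ℝ, fderiv ℝ L (p + s • v) v =
      c1 + 2 * c2 * s + 3 * c3 * s ^ 2 + 4 * c4 * s ^ 3 := by
    intro s
    have h1 : HasDerivAt (fun s : ℝ => L (p + s • v)) (fderiv ℝ L (p + s • v) v) s :=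
      ((hL.differentiable (by norm_num)) (p + s • v)).hasFDerivAt.comp_hasDerivAt s (hline s)
    have h2 : HasDerivAt (fun s : ℝ => L (p + s • v))
        (c1 + 2 * c2 * s + 3 * c3 * s ^ 2 + 4 * c4 * s ^ 3) s := by
      rw [funext h]
      have := ((((hasDerivAt_const s c0).add ((hasDerivAt_id s).const_mul c1)).add
        ((hasDerivAt_pow 2 s).const_mul c2)).add ((hasDerivAt_pow 3 s).const_mul c3)).add
        ((hasDerivAt_pow 4 s).const_mul c4)
      refine HasDerivAt.congr_deriv this ?_
      norm_num
      ring
    exact h1.unique h2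
  refine ⟨by simpa using key 0, ?_⟩
  rw [iteratedFDeriv_two_apply]
  simp only [Matrix.cons_val_zero, Matrix.cons_val_one]
  have hd : Differentiable ℝ (fderiv ℝ L) :=
    (hL.fderiv_right (m := 1) (by norm_num)).differentiable (by norm_num)
  have h1 : HasDerivAt (fun s : ℝ => fderiv ℝ L (p + s • v) v)
      (fderiv ℝ (fderiv ℝ L) (p + (0:ℝ) • v) v v) 0 := by
    have := (hd (p + (0:ℝ) • v)).hasFDerivAt.comp_hasDerivAt 0 (hline 0)
    simpa using this.clm_apply (hasDerivAt_const (0:ℝ) v)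
  have h2 : HasDerivAt (fun s : ℝ => fderiv ℝ L (p + s • v) v) (2 * c2) 0 := by
    rw [funext key]
    have := (((hasDerivAt_const (0:ℝ) c1).add ((hasDerivAt_id (0:ℝ)).const_mul (2 * c2))).add
        ((hasDerivAt_pow 2 (0:ℝ)).const_mul (3 * c3))).add
        ((hasDerivAt_pow 3 (0:ℝ)).const_mul (4 * c4))
    refine HasDerivAt.congr_deriv this ?_
    norm_num
  have := h1.unique h2
  simpa using this

lemma quad_contra (F a b q : ℝ) (hF : 0 ≤ F) (hab : a ≤ b) (hb : 0 < b) (hq : q < 0)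
    (h : ∀ e : ℝ, 0 ≤ e ^ 2 * F + 2 * ((1 + e) ^ 2 * b - a) * q) : False := by
  have hpos : 0 < F + 1 := by linarith
  set e : ℝ := (-q) * b / (F + 1) with he
  have hepos : 0 < e := by
    rw [he]; exact div_pos (mul_pos (by linarith) hb) hpos
  have h1 := h e
  have h2 : e * (F + 1) = (-q) * b := by rw [he]; field_simp
  have h3 : 0 < e * ((-q) * b) := mul_pos hepos (mul_pos (by linarith) hb)
  nlinarith [mul_nonneg (sub_nonneg.2 hab) (neg_nonneg.2 hq.le),
    mul_pos (mul_pos hepos hepos) (mul_pos hb (neg_pos.2 hq)), sq_nonneg e,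
    mul_pos hepos hepos]

lemma core_contra {d k : ℕ} (R : Matrix (Fin d) (Fin d) ℝ)
    (B₁ B₂ U₁ U₂ : Matrix (Fin d) (Fin k) ℝ)
    (hsurj : ∀ w : Fin k → ℝ, ∃ n : Fin d → ℝ, B₁ᵀ *ᵥ n = 0 ∧ B₂ᵀ *ᵥ n = w)
    (h2R : (2 : ℝ) • R = B₁ * B₁ᵀ - B₂ * B₂ᵀ - U₁ * U₁ᵀ + U₂ * U₂ᵀ)
    (hess : ∀ (H : Matrix (Fin d) (Fin d) ℝ) (V₁ V₂ : Matrix (Fin d) (Fin k) ℝ),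
      0 ≤ frobSq (H + V₁ * U₁ᵀ + U₁ * V₁ᵀ) + frobSq (H + V₂ * U₂ᵀ + U₂ * V₂ᵀ)
        - 2 * ipF R (V₁ * V₁ᵀ) + 2 * ipF R (V₂ * V₂ᵀ))
    (x y : Fin k → ℝ) (hxy : U₁ *ᵥ x = U₂ *ᵥ y) (hle : x ⬝ᵥ x ≤ y ⬝ᵥ y) (hy : y ≠ 0) :
    False := by
  have hyy : 0 < y ⬝ᵥ y := by
    have h0 : 0 ≤ y ⬝ᵥ y := Finset.sum_nonneg fun i _ => mul_self_nonneg _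
    exact lt_of_le_of_ne h0 (fun h => hy (dotProduct_self_eq_zero.1 h.symm))
  -- R is positive semidefinite
  have hR : ∀ z : Fin d → ℝ, 0 ≤ z ⬝ᵥ (R *ᵥ z) := by
    intro z
    by_contra! hq
    set u := U₁ *ᵥ x with hu
    refine quad_contra (frobSq (vecMulVec z u + vecMulVec u z)) (x ⬝ᵥ x) (y ⬝ᵥ y) _
      (frobSq_nonneg _) hle hyy hq fun e => ?_
    have h := hess (-(vecMulVec z u + vecMulVec u z)) (vecMulVec z x)
      ((1 + e) • vecMulVec z y)
    have e1 : vecMulVec z x * U₁ᵀ = vecMulVec z u := by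
      rw [vecMulVec_mul, vecMul_transpose]
    have e2 : U₁ * (vecMulVec z x)ᵀ = vecMulVec u z := by
      rw [transpose_vecMulVec, mul_vecMulVec]
    have e3 : vecMulVec z y * U₂ᵀ = vecMulVec z u := by
      rw [vecMulVec_mul, vecMul_transpose, hxy]
    have e4 : U₂ * (vecMulVec z y)ᵀ = vecMulVec u z := by
      rw [transpose_vecMulVec, mul_vecMulVec, hxy]
    have e5 : ∀ t : Fin k → ℝ, vecMulVec z t * (vecMulVec z t)ᵀ = (t ⬝ᵥ t) • vecMulVec z z := by
      intro t
      rw [transpose_vecMulVec, vecMulVec_mul_vecMulVec]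
      ext i j; simp [vecMulVec_apply]; try ring
    have f1 : -(vecMulVec z u + vecMulVec u z) + vecMulVec z x * U₁ᵀ + U₁ * (vecMulVec z x)ᵀ
        = (0:ℝ) • (vecMulVec z u + vecMulVec u z) := by
      rw [e1, e2, zero_smul]; abel
    have f2 : -(vecMulVec z u + vecMulVec u z) + ((1 + e) • vecMulVec z y) * U₂ᵀ
        + U₂ * ((1 + e) • vecMulVec z y)ᵀ
        = e • (vecMulVec z u + vecMulVec u z) := by
      rw [transpose_smul, smul_mul, Matrix.mul_smul, e3, e4]; module
    have f3 : ((1 + e) • vecMulVec z y) * ((1 + e) • vecMulVec z y)ᵀ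
        = ((1 + e) ^ 2 * (y ⬝ᵥ y)) • vecMulVec z z := by
      rw [transpose_smul, smul_mul, Matrix.mul_smul, e5]; module
    rw [f1, f2, f3, e5, frobSq_smul, frobSq_smul, ipF_smul, ipF_smul, ipF_vec] at h
    linarith
  choose n0 hn0 using hsurj
  -- linear section
  let K : Submodule ℝ (Fin d → ℝ) := LinearMap.ker B₁ᵀ.mulVecLin
  let T : K →ₗ[ℝ] (Fin k → ℝ) := B₂ᵀ.mulVecLin.comp K.subtype
  have hT : LinearMap.range T = ⊤ := by
    rw [LinearMap.range_eq_top]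
    intro w
    exact ⟨⟨n0 w, (hn0 w).1⟩, (hn0 w).2⟩
  obtain ⟨s, hs⟩ := T.exists_rightInverse_of_surjective hT
  have hs1 : ∀ w, B₁ᵀ *ᵥ (s w : Fin d → ℝ) = 0 := fun w => (s w).2
  have hs2 : ∀ w, B₂ᵀ *ᵥ (s w : Fin d → ℝ) = w := fun w => LinearMap.congr_fun hs w
  have quad : ∀ (M : Matrix (Fin d) (Fin k) ℝ) (n : Fin d → ℝ),
      n ⬝ᵥ ((M * Mᵀ) *ᵥ n) = (Mᵀ *ᵥ n) ⬝ᵥ (Mᵀ *ᵥ n) := by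
    intro M n
    rw [← mulVec_mulVec, dotProduct_mulVec, mulVec_transpose]
  have hneg : ∀ w, (U₁ᵀ *ᵥ (s w : Fin d → ℝ)) ⬝ᵥ (U₁ᵀ *ᵥ (s w : Fin d → ℝ)) + w ⬝ᵥ w ≤
      (U₂ᵀ *ᵥ (s w : Fin d → ℝ)) ⬝ᵥ (U₂ᵀ *ᵥ (s w : Fin d → ℝ)) := by
    intro w
    have h := hR (s w)
    have h' : (s w : Fin d → ℝ) ⬝ᵥ (((2:ℝ) • R) *ᵥ (s w : Fin d → ℝ)) = 2 *
      ((s w : Fin d → ℝ) ⬝ᵥ (R *ᵥ (s w : Fin d → ℝ))) := by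
      rw [smul_mulVec, dotProduct_smul, smul_eq_mul]
    rw [h2R, add_mulVec, sub_mulVec, sub_mulVec, dotProduct_add, dotProduct_sub,
      dotProduct_sub, quad, quad, quad, quad, hs1, hs2, dotProduct_zero] at h'
    linarith
  have nn : ∀ t : Fin k → ℝ, 0 ≤ t ⬝ᵥ t := fun t => Finset.sum_nonneg fun i _ => mul_self_nonneg _
  let P : (Fin k → ℝ) →ₗ[ℝ] (Fin k → ℝ) := U₂ᵀ.mulVecLin.comp (K.subtype.comp s)
  have hPapp : ∀ w, P w = U₂ᵀ *ᵥ (s w : Fin d → ℝ) := fun w => rfl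
  have hPinj : Function.Injective P := by
    rw [injective_iff_map_eq_zero]
    intro w hw
    have := hneg w
    rw [← hPapp, hw, dotProduct_zero] at this
    exact dotProduct_self_eq_zero.1 (le_antisymm (by linarith [nn (U₁ᵀ *ᵥ (s w : Fin d → ℝ))]) (nn w))
  obtain ⟨w, hw⟩ := (LinearMap.injective_iff_surjective.1 hPinj) y
  have hw0 : 0 < w ⬝ᵥ w := by
    refine lt_of_le_of_ne (nn w) (fun h => hy ?_)
    rw [← hw, dotProduct_self_eq_zero.1 h.symm, map_zero]
  rw [hPapp] at hw
  have h1 := hneg w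
  rw [hw] at h1
  set a := U₁ᵀ *ᵥ (s w : Fin d → ℝ) with ha
  have h2 : a ⬝ᵥ x = y ⬝ᵥ y := by
    rw [ha]
    nth_rw 1 [← hw]
    rw [mulVec_transpose, mulVec_transpose, ← dotProduct_mulVec, ← dotProduct_mulVec, hxy]
  have h3 := nn (a - x)
  simp only [sub_dotProduct, dotProduct_sub] at h3
  rw [dotProduct_comm x a] at h3
  linarith

lemma core_indep {d k : ℕ} (R : Matrix (Fin d) (Fin d) ℝ) (hsym : Rᵀ = R)
    (B₁ B₂ U₁ U₂ : Matrix (Fin d) (Fin k) ℝ)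
    (h2R : (2 : ℝ) • R = B₁ * B₁ᵀ - B₂ * B₂ᵀ - U₁ * U₁ᵀ + U₂ * U₂ᵀ)
    (hU₁ : R * U₁ = 0) (hU₂ : R * U₂ = 0)
    (hinj : ∀ x y : Fin k → ℝ, U₁ *ᵥ x = U₂ *ᵥ y → x = 0 ∧ y = 0) : R = 0 := by
  let U := fromCols U₁ U₂
  let B := fromCols B₁ B₂
  let J : Matrix (Fin k ⊕ Fin k) (Fin k ⊕ Fin k) ℝ := fromBlocks 1 0 0 (-1)
  have hJJ : J * J = 1 := by simp [J, fromBlocks_multiply]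
  have hUi : Function.Injective U.mulVec := by
    intro a b hab
    have h0 : U *ᵥ (a - b) = 0 := by rw [mulVec_sub]; exact sub_eq_zero.2 hab
    have h1 : U₁ *ᵥ ((a - b) ∘ Sum.inl) = U₂ *ᵥ (-((a - b) ∘ Sum.inr)) := by
      rw [mulVec_neg, eq_neg_iff_add_eq_zero]
      rw [← h0]; simp only [U]; rw [fromCols_mulVec]
    obtain ⟨h2, h3⟩ := hinj _ _ h1
    rw [neg_eq_zero] at h3
    ext i
    rcases i with i | i
    · exact sub_eq_zero.1 (congrFun h2 i)
    · exact sub_eq_zero.1 (congrFun h3 i)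
  have hRU : R * U = 0 := by simp only [U]; rw [mul_fromCols, hU₁, hU₂]; simp
  have hDec : ∀ X Y : Matrix (Fin d) (Fin k) ℝ,
      fromCols X Y * J * (fromCols X Y)ᵀ = X * Xᵀ - Y * Yᵀ := by
    intro X Y
    simp only [J]
    rw [fromCols_mul_fromBlocks, transpose_fromCols, fromCols_mul_fromRows]
    simp [sub_eq_add_neg]
  have hM : B * J * Bᵀ = (2:ℝ) • R + U * J * Uᵀ := by
    simp only [B, U]; rw [hDec, hDec, h2R]; abel
  have hG : IsUnit (Uᵀ * U).det := by
    have := (Matrix.PosDef.conjTranspose_mul_self U hUi).isUnit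
    rw [conjTranspose_eq_transpose_of_trivial] at this
    exact (isUnit_iff_isUnit_det _).1 this
  let C := J * Bᵀ * U * ((Uᵀ * U)⁻¹ * J)
  have hUB : U = B * C := by
    have : B * C = (B * J * Bᵀ) * U * ((Uᵀ * U)⁻¹ * J) := by simp only [C, Matrix.mul_assoc]
    rw [this, hM, Matrix.add_mul, smul_mul, hRU, smul_zero, zero_add]
    calc U = U * (J * J) := by rw [hJJ, Matrix.mul_one]
      _ = U * J * ((Uᵀ * U) * (Uᵀ * U)⁻¹) * J := by
        rw [mul_nonsing_inv _ hG, Matrix.mul_one, Matrix.mul_assoc]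
      _ = _ := by simp only [Matrix.mul_assoc]
  have hCi : Function.Injective C.mulVec := by
    intro a b hab
    apply hUi
    have hab' : C *ᵥ a = C *ᵥ b := hab
    have hm : ∀ c, U *ᵥ c = B *ᵥ (C *ᵥ c) := fun c => by
      rw [mulVec_mulVec, ← hUB]
    rw [hm, hm, hab']
  have hCu : IsUnit C.det := (isUnit_iff_isUnit_det _).1 (mulVec_injective_iff_isUnit.1 hCi)
  have hRB : R * B = 0 := by
    have : B = U * C⁻¹ := by
      rw [hUB, Matrix.mul_assoc, mul_nonsing_inv _ hCu, Matrix.mul_one]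
    rw [this, ← Matrix.mul_assoc, hRU, Matrix.zero_mul]
  have hRR : R * R = 0 := by
    have h := congrArg (R * ·) hM
    simp only [Matrix.mul_add, ← Matrix.mul_assoc, hRB, hRU, Matrix.zero_mul, Matrix.mul_smul,
      add_zero] at h
    exact (smul_eq_zero.1 h.symm).resolve_left (two_ne_zero (α := ℝ))
  apply frobSq_eq_zero
  rw [← ipF_self, ipF_eq_trace, hsym, hRR, trace_zero]

lemma loss_line {d k : ℕ} (C A H : Matrix (Fin d) (Fin d) ℝ)
    (U V : Matrix (Fin d) (Fin k) ℝ) (s : ℝ) :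
    C - (A + s • H) - (U + s • V) * (U + s • V)ᵀ =
      (C - A - U * Uᵀ) - s • (H + V * Uᵀ + U * Vᵀ) - s ^ 2 • (V * Vᵀ) := by
  rw [transpose_add, transpose_smul, Matrix.add_mul, Matrix.mul_add, Matrix.mul_add]
  simp only [smul_mul, Matrix.mul_smul]
  module

lemma frob_contDiff {E : Type*} [NormedAddCommGroup E] [NormedSpace ℝ E] {d k : ℕ}
    (C : Matrix (Fin d) (Fin d) ℝ) (f : E → Matrix (Fin d) (Fin d) ℝ)
    (g : E → Matrix (Fin d) (Fin k) ℝ)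
    (hf : ∀ i j, ContDiff ℝ 2 (fun p => f p i j))
    (hg : ∀ i j, ContDiff ℝ 2 (fun p => g p i j)) :
    ContDiff ℝ 2 (fun p => frobSq (C - f p - g p * (g p)ᵀ)) := by
  simp only [frobSq, Matrix.sub_apply, Matrix.mul_apply, Matrix.transpose_apply]
  fun_prop

lemma entry_contDiff {m n : Type*} [Fintype m] [Fintype n] (i : m) (j : n) :
    ContDiff ℝ 2 (fun M : Matrix m n ℝ => M i j) := by
  let f : Matrix m n ℝ →ₗ[ℝ] ℝ :=
    { toFun := fun M => M i j, map_add' := fun _ _ => rfl, map_smul' := fun _ _ => rfl }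
  exact (LinearMap.toContinuousLinearMap f).contDiff

lemma loss_contDiff {d k : ℕ} (C₁ C₂ : Matrix (Fin d) (Fin d) ℝ) :
    ContDiff ℝ 2 (fun p : Matrix (Fin d) (Fin d) ℝ × Matrix (Fin d) (Fin k) ℝ ×
        Matrix (Fin d) (Fin k) ℝ => (1 / 2) *
      (frobSq (C₁ - p.1 - p.2.1 * p.2.1ᵀ) + frobSq (C₂ - p.1 - p.2.2 * p.2.2ᵀ))) := by
  have h0 : ∀ i j, ContDiff ℝ 2 (fun p : Matrix (Fin d) (Fin d) ℝ × Matrix (Fin d) (Fin k) ℝ ×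
        Matrix (Fin d) (Fin k) ℝ => p.1 i j) := fun i j =>
    ContDiff.comp (g := fun M : Matrix (Fin d) (Fin d) ℝ => M i j) (entry_contDiff i j)
      contDiff_fst
  have h1 : ∀ i j, ContDiff ℝ 2 (fun p : Matrix (Fin d) (Fin d) ℝ × Matrix (Fin d) (Fin k) ℝ ×
        Matrix (Fin d) (Fin k) ℝ => p.2.1 i j) := fun i j =>
    ContDiff.comp (g := fun M : Matrix (Fin d) (Fin k) ℝ => M i j) (entry_contDiff i j)
      (contDiff_fst.comp contDiff_snd)
  have h2 : ∀ i j, ContDiff ℝ 2 (fun p : Matrix (Fin d) (Fin d) ℝ × Matrix (Fin d) (Fin k) ℝ ×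
        Matrix (Fin d) (Fin k) ℝ => p.2.2 i j) := fun i j =>
    ContDiff.comp (g := fun M : Matrix (Fin d) (Fin k) ℝ => M i j) (entry_contDiff i j)
      (contDiff_snd.comp contDiff_snd)
  have a1 := frob_contDiff C₁ _ _ h0 h1
  have a2 := frob_contDiff C₂ _ _ h0 h2
  exact contDiff_const.mul (a1.add a2)

/-- Theorem 4 (strict saddle property, `T = 2`): a point has zero two-task Meta-LoRA
loss iff it is a second-order stationary point (vanishing Fréchet derivative and
positive semidefinite second derivative). -/
theorem metaLoRA_two_task_SOSP_iff_global_min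
    (d k : ℕ) (hd : 0 < d) (hk : 0 < k) (hkd : 2 * k ≤ d)
    (Astar : Matrix (Fin d) (Fin d) ℝ)
    (U₁s U₂s : Matrix (Fin d) (Fin k) ℝ)
    (hdiv : (Matrix.fromCols U₁s U₂s).rank = 2 * k)
    (L : Matrix (Fin d) (Fin d) ℝ × Matrix (Fin d) (Fin k) ℝ × Matrix (Fin d) (Fin k) ℝ → ℝ)
    (hL : ∀ p, L p = (1 / 2) *
      (frobSq (Astar + U₁s * U₁sᵀ - p.1 - p.2.1 * p.2.1ᵀ) +
       frobSq (Astar + U₂s * U₂sᵀ - p.1 - p.2.2 * p.2.2ᵀ))) :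
    ∀ p, L p = 0 ↔
      (fderiv ℝ L p = 0 ∧
        ∀ v : Matrix (Fin d) (Fin d) ℝ × Matrix (Fin d) (Fin k) ℝ ×
            Matrix (Fin d) (Fin k) ℝ,
          0 ≤ iteratedFDeriv ℝ 2 L p ![v, v]) := by
  have hsm : ContDiff ℝ 2 L := by
    have e : L = fun p => (1 / 2) *
      (frobSq (Astar + U₁s * U₁sᵀ - p.1 - p.2.1 * p.2.1ᵀ) +
       frobSq (Astar + U₂s * U₂sᵀ - p.1 - p.2.2 * p.2.2ᵀ)) := funext hL
    rw [e]
    exact loss_contDiff _ _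
  rintro ⟨A, U₁, U₂⟩
  set R₁ := Astar + U₁s * U₁sᵀ - A - U₁ * U₁ᵀ with hR₁
  set R₂ := Astar + U₂s * U₂sᵀ - A - U₂ * U₂ᵀ with hR₂
  have hLp : L (A, U₁, U₂) = 1 / 2 * (frobSq R₁ + frobSq R₂) := hL _
  have hder : ∀ (H : Matrix (Fin d) (Fin d) ℝ) (V₁ V₂ : Matrix (Fin d) (Fin k) ℝ),
      fderiv ℝ L (A, U₁, U₂) (H, V₁, V₂) =
        - (ipF R₁ (H + V₁ * U₁ᵀ + U₁ * V₁ᵀ) + ipF R₂ (H + V₂ * U₂ᵀ + U₂ * V₂ᵀ)) ∧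
      iteratedFDeriv ℝ 2 L (A, U₁, U₂) ![(H, V₁, V₂), (H, V₁, V₂)] =
        frobSq (H + V₁ * U₁ᵀ + U₁ * V₁ᵀ) + frobSq (H + V₂ * U₂ᵀ + U₂ * V₂ᵀ)
        - 2 * ipF R₁ (V₁ * V₁ᵀ) - 2 * ipF R₂ (V₂ * V₂ᵀ) := by
    intro H V₁ V₂
    have := line_derivs L hsm (A, U₁, U₂) (H, V₁, V₂) _ _ _ _ _ (fun s => by
      rw [hL]
      simp only [Prod.smul_mk, Prod.mk_add_mk]
      rw [loss_line, loss_line, frobSq_expand, frobSq_expand, ← hR₁, ← hR₂]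
      rw [show ∀ a0 a1 a2 a3 a4 b0 b1 b2 b3 b4 : ℝ,
        1 / 2 * (a0 + a1 * s + a2 * s ^ 2 + a3 * s ^ 3 + a4 * s ^ 4 +
          (b0 + b1 * s + b2 * s ^ 2 + b3 * s ^ 3 + b4 * s ^ 4)) =
        (1 / 2 * (a0 + b0)) + (1 / 2 * (a1 + b1)) * s + (1 / 2 * (a2 + b2)) * s ^ 2
          + (1 / 2 * (a3 + b3)) * s ^ 3 + (1 / 2 * (a4 + b4)) * s ^ 4 from
        fun a0 a1 a2 a3 a4 b0 b1 b2 b3 b4 => by ring])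
    refine ⟨this.1.trans (by ring), this.2.trans (by ring)⟩
  constructor
  · intro h0
    rw [hLp] at h0
    have n1 := frobSq_nonneg R₁
    have n2 := frobSq_nonneg R₂
    have z1 : R₁ = 0 := frobSq_eq_zero (by linarith)
    have z2 : R₂ = 0 := frobSq_eq_zero (by linarith)
    constructor
    · refine ContinuousLinearMap.ext ?_
      rintro ⟨H, V₁, V₂⟩
      rw [(hder H V₁ V₂).1, z1, z2]
      simp [ipF]
    · rintro ⟨H, V₁, V₂⟩
      rw [(hder H V₁ V₂).2, z1, z2]
      have := frobSq_nonneg (H + V₁ * U₁ᵀ + U₁ * V₁ᵀ)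
      have := frobSq_nonneg (H + V₂ * U₂ᵀ + U₂ * V₂ᵀ)
      simp only [ipF, Matrix.zero_apply, zero_mul, Finset.sum_const_zero]
      linarith
  · rintro ⟨hg, hh⟩
    have grad : ∀ (H : Matrix (Fin d) (Fin d) ℝ) (V₁ V₂ : Matrix (Fin d) (Fin k) ℝ),
        ipF R₁ (H + V₁ * U₁ᵀ + U₁ * V₁ᵀ) + ipF R₂ (H + V₂ * U₂ᵀ + U₂ * V₂ᵀ) = 0 := by
      intro H V₁ V₂
      have := (hder H V₁ V₂).1
      rw [hg] at this
      have h0 : (0 : ℝ) = _ := this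
      linarith
    have hsum : R₁ + R₂ = 0 := by
      apply frobSq_eq_zero
      have := grad (R₁ + R₂) 0 0
      simp only [Matrix.zero_mul, Matrix.transpose_zero, Matrix.mul_zero, add_zero] at this
      rw [← this, ← ipF_self]
      simp only [ipF_eq_trace, transpose_add, Matrix.add_mul, trace_add]
    have hR2 : R₂ = -R₁ := (neg_eq_of_add_eq_zero_right hsum).symm
    have h2R : (2 : ℝ) • R₁ = U₁s * U₁sᵀ - U₂s * U₂sᵀ - U₁ * U₁ᵀ + U₂ * U₂ᵀ := by
      have : (2 : ℝ) • R₁ = R₁ - R₂ := by rw [hR2]; module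
      rw [this, hR₁, hR₂]; abel
    have hsym : R₁ᵀ = R₁ := by
      have h := congrArg transpose h2R
      simp only [transpose_smul, transpose_add, transpose_sub, transpose_mul,
        transpose_transpose] at h
      rw [← h2R] at h
      exact smul_right_injective _ (two_ne_zero (α := ℝ)) h
    have hRU : ∀ U : Matrix (Fin d) (Fin k) ℝ,
        ipF R₁ (R₁ * U * Uᵀ + U * (R₁ * U)ᵀ) = 0 → R₁ * U = 0 := by
      intro U h
      apply frobSq_eq_zero
      rw [← ipF_self, ipF_eq_trace]
      rw [ipF_eq_trace, hsym, Matrix.mul_add, trace_add] at h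
      have e1 : (R₁ * (R₁ * U * Uᵀ)).trace = ((R₁ * U)ᵀ * (R₁ * U)).trace := by
        rw [← Matrix.mul_assoc, trace_mul_comm, transpose_mul, hsym]
        simp only [Matrix.mul_assoc]
      have e2 : (R₁ * (U * (R₁ * U)ᵀ)).trace = ((R₁ * U)ᵀ * (R₁ * U)).trace := by
        rw [← Matrix.mul_assoc, trace_mul_comm]
      linarith
    have hU₁ : R₁ * U₁ = 0 := by
      apply hRU
      have := grad 0 (R₁ * U₁) 0
      simpa [ipF] using this
    have hU₂ : R₁ * U₂ = 0 := by
      apply hRU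
      have := grad 0 0 (R₁ * U₂)
      rw [hR2, ipF_neg] at this
      simpa [ipF] using this
    have hess : ∀ (H : Matrix (Fin d) (Fin d) ℝ) (V₁ V₂ : Matrix (Fin d) (Fin k) ℝ),
        0 ≤ frobSq (H + V₁ * U₁ᵀ + U₁ * V₁ᵀ) + frobSq (H + V₂ * U₂ᵀ + U₂ * V₂ᵀ)
        - 2 * ipF R₁ (V₁ * V₁ᵀ) + 2 * ipF R₁ (V₂ * V₂ᵀ) := by
      intro H V₁ V₂
      have h := hh (H, V₁, V₂)
      rw [(hder H V₁ V₂).2, hR2, ipF_neg] at h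
      linarith
    have hsurj : ∀ w₁ w₂ : Fin k → ℝ, ∃ n : Fin d → ℝ, U₁sᵀ *ᵥ n = w₁ ∧ U₂sᵀ *ᵥ n = w₂ := by
      have htop : LinearMap.range (fromCols U₁s U₂s)ᵀ.mulVecLin = ⊤ := by
        apply Submodule.eq_top_of_finrank_eq
        have : (fromCols U₁s U₂s)ᵀ.rank = 2 * k := by rw [rank_transpose, hdiv]
        rw [Matrix.rank] at this
        rw [this]
        simp [two_mul]
      intro w₁ w₂
      obtain ⟨n, hn⟩ := LinearMap.range_eq_top.1 htop (Sum.elim w₁ w₂)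
      rw [mulVecLin_apply, transpose_fromCols, fromRows_mulVec] at hn
      exact ⟨n, funext fun i => congrFun hn (Sum.inl i), funext fun i => congrFun hn (Sum.inr i)⟩
    have hR0 : R₁ = 0 := by
      refine core_indep R₁ hsym U₁s U₂s U₁ U₂ h2R hU₁ hU₂ fun x y hxy => ?_
      have nn : ∀ t : Fin k → ℝ, 0 ≤ t ⬝ᵥ t :=
        fun t => Finset.sum_nonneg fun i _ => mul_self_nonneg _
      rcases le_total (x ⬝ᵥ x) (y ⬝ᵥ y) with hle | hle
      · have hy : y = 0 := by
          by_contra hy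
          exact core_contra R₁ U₁s U₂s U₁ U₂ (fun w => hsurj 0 w) h2R hess x y hxy hle hy
        subst hy
        rw [dotProduct_zero] at hle
        exact ⟨dotProduct_self_eq_zero.1 (le_antisymm hle (nn x)), rfl⟩
      · have hx : x = 0 := by
          by_contra hx
          refine core_contra (-R₁) U₂s U₁s U₂ U₁ (fun w => ?_) ?_ ?_ y x hxy.symm hle hx
          · obtain ⟨n, h1, h2⟩ := hsurj w 0
            exact ⟨n, h2, h1⟩
          · rw [smul_neg, h2R]; abel
          · intro H V₁ V₂
            have := hess H V₂ V₁
            rw [ipF_neg, ipF_neg]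
            linarith
        subst hx
        rw [dotProduct_zero] at hle
        exact ⟨rfl, dotProduct_self_eq_zero.1 (le_antisymm hle (nn y))⟩
    rw [hLp, hR2, hR0]
    simp [frobSq]
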